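/- For every r ≥ 2 and every fixed ordered r-matching H of size k, the probability that RM_n^(r) contains a copy of H (that is, a subfamily N ⊆ RM_n^(r) of k edges such that the unique order-preserving bijection from the union of the edges of N onto [rk] maps N onto H) tends to 1 as n → ∞. -/

import Mathlib

open Finset
open scoped Classical

/-- An ordered `r`-matching of size `n`: a partition of `[r*n] = {1,…,r*n}` into `n`
pairwise disjoint `r`-element subsets (the edges). -/
def IsOrderedMatching (r n : ℕ) (M : Finset (Finset ℕ)) : Prop :=
  M.card = n ∧ (∀ e ∈ M, e.card = r) ∧
  (∀ e ∈ M, ∀ f ∈ M, e ≠ f → Disjoint e f) ∧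
  M.biUnion id = Finset.Icc 1 (r * n)

/-- Two disjoint `r`-element sets `e`, `f` form the `r`-pattern `P`: the unique
order-preserving bijection from `e ∪ f` onto `[2r]` maps the pair `{e, f}` onto `P`. -/
def FormsPattern (r : ℕ) (e f : Finset ℕ) (P : Finset (Finset ℕ)) : Prop :=
  ∃ φ : ℕ → ℕ, StrictMonoOn φ ↑(e ∪ f) ∧
    (e ∪ f).image φ = Finset.Icc 1 (2 * r) ∧
    ({e.image φ, f.image φ} : Finset (Finset ℕ)) = P

/-- A `Ps`-clique: a family of pairwise disjoint `r`-element subsets of `ℕ`, every two of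
which form a pattern belonging to `Ps`. -/
def IsClique (r : ℕ) (Ps : Set (Finset (Finset ℕ))) (K : Finset (Finset ℕ)) : Prop :=
  (∀ e ∈ K, e.card = r) ∧ (∀ e ∈ K, ∀ f ∈ K, e ≠ f → Disjoint e f) ∧
  (∀ e ∈ K, ∀ f ∈ K, e ≠ f → ∃ P ∈ Ps, FormsPattern r e f P)

/-- `z_Ps(M)`: the maximum size of a subfamily of `M` that is a `Ps`-clique. -/
noncomputable def zClique (r : ℕ) (Ps : Set (Finset (Finset ℕ))) (M : Finset (Finset ℕ)) : ℕ :=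
  sSup {k | ∃ K : Finset (Finset ℕ), K ⊆ M ∧ IsClique r Ps K ∧ K.card = k}

/-- All ordered `r`-matchings of size `n` (as a finset). -/
noncomputable def matchingFamilies (r n : ℕ) : Finset (Finset (Finset ℕ)) :=
  ((Finset.Icc 1 (r * n)).powerset.powerset).filter (IsOrderedMatching r n)

/-- The probability of the event `A` for a uniformly random ordered `r`-matching of size `n`. -/
noncomputable def prob (r n : ℕ) (A : Finset (Finset ℕ) → Prop) : ℝ :=
  (((matchingFamilies r n).filter A).card : ℝ) / ((matchingFamilies r n).card : ℝ)

/-- Expectation of `X` with respect to a uniformly random ordered `r`-matching of size `n`. -/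
noncomputable def expect (r n : ℕ) (X : Finset (Finset ℕ) → ℝ) : ℝ :=
  (∑ M ∈ matchingFamilies r n, X M) / ((matchingFamilies r n).card : ℝ)

/-- An `r`-partite `r`-pattern: each edge contains exactly one of `{2i-1, 2i}` for each
`i = 1, …, r`. -/
def IsPartitePattern (r : ℕ) (P : Finset (Finset ℕ)) : Prop :=
  IsOrderedMatching r 2 P ∧
  ∀ e ∈ P, ∀ i ∈ Finset.Icc 1 r, (e ∩ {2 * i - 1, 2 * i}).card = 1

/-- An `r`-pattern `P` is collectable if there exist arbitrarily large `{P}`-cliques. -/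
def Collectable (r : ℕ) (P : Finset (Finset ℕ)) : Prop :=
  ∀ k : ℕ, ∃ K : Finset (Finset ℕ), IsClique r {P} K ∧ K.card = k

/-- The word of a pattern `P` over `{A=true, B=false}`: the `j`-th letter is `true` iff
vertex `j` lies in the edge of `P` containing `1`. -/
noncomputable def patternWord (r : ℕ) (P : Finset (Finset ℕ)) : List Bool :=
  (List.range (2 * r)).map (fun j => decide (∃ e ∈ P, 1 ∈ e ∧ j + 1 ∈ e))

/-- `lam` is a splitting of the word `w` into consecutive blocks of the form
`A^t B^t` or `B^t A^t` with half-lengths given by `lam`. -/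
def IsBlockSplitting (w : List Bool) (lam : List ℕ) : Prop :=
  (∀ t ∈ lam, 1 ≤ t) ∧
  ∃ bs : List Bool, bs.length = lam.length ∧
    w = (List.zipWith (fun t b => List.replicate t b ++ List.replicate t !b) lam bs).flatten

/-- The pattern `P` has composition `lam` (the sequence of half-lengths of the blocks of
its unique splitting). -/
def HasComposition (r : ℕ) (P : Finset (Finset ℕ)) (lam : List ℕ) : Prop :=
  IsBlockSplitting (patternWord r P) lam

/-- Two distinct collectable `r`-patterns are harmonious if they have the same composition. -/
def Harmonious (r : ℕ) (P Q : Finset (Finset ℕ)) : Prop :=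
  P ≠ Q ∧ Collectable r P ∧ Collectable r Q ∧
  ∃ lam : List ℕ, HasComposition r P lam ∧ HasComposition r Q lam

/-- A pair of distinct `r`-patterns is a mismatch if exactly one of them is collectable, or
both are collectable but their compositions differ. -/
def Mismatch (r : ℕ) (P Q : Finset (Finset ℕ)) : Prop :=
  P ≠ Q ∧
  ((Collectable r P ∧ ¬ Collectable r Q) ∨
   (¬ Collectable r P ∧ Collectable r Q) ∨
   (Collectable r P ∧ Collectable r Q ∧
     ¬ ∃ lam : List ℕ, HasComposition r P lam ∧ HasComposition r Q lam))

/-- The trace of an ordered `r`-matching of size `k` on `[rk]`: the `j`-th letter equals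
`i` when `j` is the `i`-th smallest element of the edge containing `j`. -/
noncomputable def trace (r k : ℕ) (M : Finset (Finset ℕ)) : List ℕ :=
  (List.range (r * k)).map (fun j₀ =>
    ((Finset.Icc 1 (r * k)).filter
      (fun x => x ≤ j₀ + 1 ∧ ∃ e ∈ M, j₀ + 1 ∈ e ∧ x ∈ e)).card)

/-- `a_Ps(k)`: the number of `Ps`-cliques of size `k` whose edges partition `[rk]`. -/
noncomputable def cliqueCount (r : ℕ) (Ps : Set (Finset (Finset ℕ))) (k : ℕ) : ℕ :=
  (((Finset.Icc 1 (r * k)).powerset.powerset).filter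
    (fun M => IsOrderedMatching r k M ∧ IsClique r Ps M)).card

/-- The maximum size of any `Ps`-clique whatsoever. -/
noncomputable def maxCliqueSize (r : ℕ) (Ps : Set (Finset (Finset ℕ))) : ℕ :=
  sSup {k | ∃ K : Finset (Finset ℕ), IsClique r Ps K ∧ K.card = k}

/-- `M` contains a copy of the ordered `r`-matching `H` of size `k`: a subfamily `N ⊆ M` of
`k` edges such that the order-preserving bijection from the union of the edges of `N`
onto `[rk]` maps `N` onto `H`. -/
def ContainsCopy (r k : ℕ) (H M : Finset (Finset ℕ)) : Prop :=
  ∃ N ⊆ M, N.card = k ∧ ∃ φ : ℕ → ℕ,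
    StrictMonoOn φ ↑(N.biUnion id) ∧
    (N.biUnion id).image φ = Finset.Icc 1 (r * k) ∧
    N.image (fun e => e.image φ) = H

/-- Delete the `j`-th smallest element of the finite set `e`. -/
def deleteJth (j : ℕ) (e : Finset ℕ) : Finset ℕ :=
  e.filter (fun x => (e.filter (· ≤ x)).card ≠ j)

/-- Relabel the elements of `e` order-preservingly by their ranks in `V`. -/
def relabel (V : Finset ℕ) (e : Finset ℕ) : Finset ℕ :=
  e.image (fun x => (V.filter (· ≤ x)).card)

/-- `S^(−j)`: delete from each edge of the pattern `S` its `j`-th smallest element and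
relabel the remaining vertices order-preservingly. -/
def patternDelete (j : ℕ) (S : Finset (Finset ℕ)) : Finset (Finset ℕ) :=
  (S.image (deleteJth j)).image (relabel ((S.image (deleteJth j)).biUnion id))

/-!
A uniformly random permutation of `[rn]` maps any fixed matching to a uniformly random one. Fix a
matching `M` of size `n`, group its edges into `m = ⌊n / (k + 1)⌋` disjoint blocks of `k` edges, and
identify the vertices of each block with `[rk]` so that the edges of the block become the edges of
`H`. If the random permutation is increasing on some block, the image of that block is a copy of
`H`. The relative orders on disjoint blocks are independent and uniform, so this fails for all
blocks with probability at most `(1 - 1 / (rk)!) ^ m`, which tends to `0`.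
-/

open scoped Pointwise Nat
open Equiv (Perm)

theorem card_filter_le_of_forall_card_filter_perm_le {T α : Type*} [Fintype T] [Nonempty T]
    {X : Finset α} {σ : T → Perm α} (hσ : ∀ t, ∀ x ∈ X, σ t x ∈ X)
    {B : α → Prop} [DecidablePred B] {q : ℝ}
    (hq : ∀ x ∈ X, (#{t | B (σ t x)} : ℝ) ≤ q * Fintype.card T) :
    (#{x ∈ X | B x} : ℝ) ≤ q * #X := by
  have card_bad (t : T) : #{x ∈ X | B (σ t x)} = #{x ∈ X | B x} := by
    have map_eq : X.map (σ t).toEmbedding = X :=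
      eq_of_subset_of_card_le
        (map_subset_iff_subset_preimage.2 fun x hx ↦ mem_preimage.2 (hσ t x hx)) (card_map _).ge
    conv_rhs => rw [← map_eq, filter_map, card_map]
    rfl
  have double_count := card_nsmul_le_card_nsmul' (R := ℝ) (s := X) (t := univ)
    (n := #{x ∈ X | B x}) (fun x t ↦ B (σ t x))
    (fun t _ ↦ by rw [bipartiteBelow, card_bad]) hq
  have card_pos : (0 : ℝ) < Fintype.card T := by exact_mod_cast Fintype.card_pos
  rw [card_univ, nsmul_eq_mul, nsmul_eq_mul] at double_count
  exact le_of_mul_le_mul_left (double_count.trans_eq (by ring)) card_pos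

section OrderPatterns

variable {K V : Type*} [LinearOrder K] [LinearOrder V]

theorem exists_perm_strictMono_comp [Finite K] {u : K → V} (hu : Function.Injective u) :
    ∃ p : Perm K, StrictMono (u ∘ p) := by
  have := Fintype.ofFinite K
  let sorted : K ≃o Set.range u := (monoEquivOfFin K rfl).symm.trans
    (monoEquivOfFin (Set.range u) (Set.card_range_of_injective hu))
  refine ⟨sorted.toEquiv.trans (Equiv.ofInjective u hu).symm, fun x y hxy ↦ ?_⟩
  simpa [Equiv.apply_ofInjective_symm] using hxy

variable {ι : Type*} [Fintype ι] [Fintype K]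

theorem card_forall_not_strictMono_comp_le {u : ι → K → V}
    (hu : ∀ i, Function.Injective (u i)) :
    #{p : ι → Perm K | ∀ i, ¬ StrictMono (u i ∘ p i)} ≤
      ((Fintype.card K)! - 1) ^ Fintype.card ι := by
  choose sorting h_sorting using fun i ↦ exists_perm_strictMono_comp (hu i)
  calc #{p : ι → Perm K | ∀ i, ¬ StrictMono (u i ∘ p i)}
      ≤ #(Fintype.piFinset fun i ↦ univ.erase (sorting i)) := by
        refine card_le_card fun p hp ↦ Fintype.mem_piFinset.2 fun i ↦ ?_
        refine mem_erase.2 ⟨fun h_eq ↦ (mem_filter.1 hp).2 i ?_, mem_univ _⟩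
        exact h_eq ▸ h_sorting i
    _ = ((Fintype.card K)! - 1) ^ Fintype.card ι := by
        simp [Fintype.card_piFinset, Fintype.card_perm]

theorem card_perm_forall_not_strictMono_le [Fintype V] (f : ι × K ↪ V) :
    (#{s : Perm V | ∀ i, ¬ StrictMono fun x ↦ s (f (i, x))} : ℝ) ≤
      (1 - 1 / (Fintype.card K)!) ^ Fintype.card ι * Fintype.card (Perm V) := by
  -- Shuffling each block independently keeps `s` uniform, and for every `s` at least one shuffle of
  -- each block makes `s` increasing on it.
  let shuffle (p : ι → Perm K) : Perm V := Perm.viaEmbedding (Equiv.prodCongrRight p) f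
  have shuffle_apply (p : ι → Perm K) (i : ι) (x : K) : shuffle p (f (i, x)) = f (i, p i x) :=
    Perm.viaEmbedding_apply _ _ _
  refine card_filter_le_of_forall_card_filter_perm_le (X := univ)
    (σ := fun p ↦ Equiv.mulRight (shuffle p)) (fun _ _ _ ↦ mem_univ _) fun s _ ↦ ?_
  simp only [Equiv.coe_mulRight, Perm.mul_apply, shuffle_apply]
  have factorial_pos : (0 : ℝ) < (Fintype.card K)! := by exact_mod_cast Nat.factorial_pos _
  have block_injective (i : ι) : Function.Injective fun x ↦ s (f (i, x)) :=
    s.injective.comp (f.injective.comp (Prod.mk_right_injective i))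
  calc (#{p : ι → Perm K | ∀ i, ¬ StrictMono fun x ↦ s (f (i, p i x))} : ℝ)
      ≤ (((Fintype.card K)! - 1) ^ Fintype.card ι : ℕ) := by
        exact_mod_cast card_forall_not_strictMono_comp_le block_injective
    _ = (1 - 1 / (Fintype.card K)!) ^ Fintype.card ι * Fintype.card (ι → Perm K) := by
        rw [Fintype.card_fun, Fintype.card_perm, Nat.cast_pow, Nat.cast_pow, ← mul_pow,
          Nat.cast_pred (Nat.factorial_pos _), sub_mul, one_mul,
          one_div_mul_cancel factorial_pos.ne']

end OrderPatterns

theorem exists_injOn_uncurry_image_mem {ι α β : Type*} [Fintype ι] [DecidableEq α]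
    [DecidableEq β] [Nonempty β] {H : Finset (Finset α)} {M : Finset (Finset β)}
    (hH : (H : Set (Finset α)).PairwiseDisjoint id)
    (hM : (M : Set (Finset β)).PairwiseDisjoint id)
    (hHM : ∀ e ∈ H, ∀ e' ∈ M, #e = #e') (hcard : Fintype.card ι * #H ≤ #M) :
    ∃ ψ : ι → α → β, Set.InjOn ψ.uncurry (Set.univ ×ˢ (H.biUnion id : Set α)) ∧
      ∀ i, ∀ e ∈ H, e.image (ψ i) ∈ M := by
  obtain ⟨target, target_mem, target_inj⟩ := Set.Finite.exists_injOn_of_encard_le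
    (hs := finite_toSet (univ (α := ι) ×ˢ H)) (t := (M : Set (Finset β)))
    (by simpa [Set.encard_coe_eq_coe_finsetCard] using mod_cast hcard)
  simp only [Set.subset_def, Set.mem_preimage, mem_coe, mem_product, mem_univ, true_and,
    Prod.forall] at target_mem
  choose! g hg using fun e (he : e ∈ H) e' (he' : e' ∈ M) ↦
    (finite_toSet e).exists_bijOn_of_encard_eq (t := (e' : Set β))
      (by simpa [Set.encard_coe_eq_coe_finsetCard] using hHM e he e' he')
  choose! edge edge_mem mem_edge using fun x (hx : x ∈ H.biUnion id) ↦ mem_biUnion.1 hx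
  refine ⟨fun i x ↦ g (edge x) (target (i, edge x)) x, ?_, fun i e he ↦ ?_⟩
  · rintro ⟨i, x⟩ ⟨-, hx⟩ ⟨j, y⟩ ⟨-, hy⟩ value_eq
    change g (edge x) (target (i, edge x)) x = g (edge y) (target (j, edge y)) y at value_eq
    have hgx := hg _ (edge_mem x hx) _ (target_mem i _ (edge_mem x hx))
    have hgy := hg _ (edge_mem y hy) _ (target_mem j _ (edge_mem y hy))
    have target_eq : target (i, edge x) = target (j, edge y) :=
      hM.elim_finset (target_mem i _ (edge_mem x hx)) (target_mem j _ (edge_mem y hy)) _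
        (hgx.mapsTo (mem_edge x hx)) (value_eq ▸ hgy.mapsTo (mem_edge y hy))
    obtain ⟨rfl, edge_eq⟩ := Prod.mk.inj <| target_inj
      (by simpa using edge_mem x hx) (by simpa using edge_mem y hy) target_eq
    rw [← edge_eq] at value_eq
    rw [hgx.injOn (mem_edge x hx) (edge_eq ▸ mem_edge y hy) value_eq]
  · have edge_eq (x : α) (hx : x ∈ e) : edge x = e :=
      have hxH : x ∈ H.biUnion id := mem_biUnion.2 ⟨e, he, hx⟩
      hH.elim_finset (edge_mem x hxH) he x (mem_edge x hxH) hx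
    have image_eq : e.image (fun x ↦ g (edge x) (target (i, edge x)) x) = target (i, e) := by
      rw [image_congr (g := g e (target (i, e))) fun x hx ↦ by simp only [edge_eq x hx]]
      exact_mod_cast (hg e he _ (target_mem i e he)).image_eq
    exact image_eq ▸ target_mem i e he

theorem IsOrderedMatching.pairwiseDisjoint {r n : ℕ} {M : Finset (Finset ℕ)}
    (hM : IsOrderedMatching r n M) : (M : Set (Finset ℕ)).PairwiseDisjoint id :=
  fun e he f hf ↦ hM.2.2.1 e he f hf

theorem IsOrderedMatching.smul {r n : ℕ} {M : Finset (Finset ℕ)} {σ : Perm ℕ}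
    (hM : IsOrderedMatching r n M) (hσ : σ • Icc 1 (r * n) = Icc 1 (r * n)) :
    IsOrderedMatching r n (σ • M) := by
  obtain ⟨card_eq, card_edge, disjoint, cover⟩ := hM
  refine ⟨(card_smul_finset σ M).trans card_eq, ?_, ?_, ?_⟩
  · rintro _ he'
    obtain ⟨e, he, rfl⟩ := mem_smul_finset.1 he'
    exact (card_smul_finset σ e).trans (card_edge e he)
  · rintro _ he' _ hf' hne
    obtain ⟨e, he, rfl⟩ := mem_smul_finset.1 he'
    obtain ⟨f, hf, rfl⟩ := mem_smul_finset.1 hf'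
    exact (disjoint_image (MulAction.injective σ)).2 (disjoint e he f hf (ne_of_apply_ne _ hne))
  · rw [← hσ, ← cover, smul_finset_def, smul_finset_def, image_biUnion, biUnion_image]
    rfl

theorem mem_matchingFamilies {r n : ℕ} {M : Finset (Finset ℕ)} :
    M ∈ matchingFamilies r n ↔ IsOrderedMatching r n M := by
  simp only [matchingFamilies, mem_filter, mem_powerset, and_iff_right_iff_imp]
  exact fun hM e he ↦ mem_powerset.2 (hM.2.2.2 ▸ subset_biUnion_of_mem id he)

theorem matchingFamilies_nonempty {r : ℕ} (hr : r ≠ 0) (n : ℕ) :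
    (matchingFamilies r n).Nonempty := by
  have hcard : n * r + 0 * (r + 1) = #(Icc 1 (r * n)) := by simp [mul_comm]
  let P := (⊥ : Finpartition (Icc 1 (r * n))).equitabilise hcard
  refine ⟨P.parts, mem_matchingFamilies.2 ⟨Finpartition.card_parts_equitabilise _ _ hr, ?_,
    fun e he f hf ↦ P.disjoint he hf, P.biUnion_parts⟩⟩
  have no_big_part := card_eq_zero.1 (Finpartition.card_filter_equitabilise_big ⊥ hcard)
  intro e he
  refine (Finpartition.card_eq_of_mem_parts_equitabilise he).resolve_right fun h_big ↦ ?_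
  exact notMem_empty e (no_big_part ▸ mem_filter.2 ⟨he, h_big⟩)

theorem containsCopy_of_strictMonoOn {r k : ℕ} {H M : Finset (Finset ℕ)} {ψ : ℕ → ℕ}
    (hH : IsOrderedMatching r k H) (hψ : StrictMonoOn ψ (Icc 1 (r * k)))
    (hM : ∀ e ∈ H, e.image ψ ∈ M) : ContainsCopy r k H M := by
  obtain ⟨card_eq, -, -, cover⟩ := hH
  let θ := Function.invFunOn ψ (Icc 1 (r * k))
  have θ_ψ : Set.LeftInvOn θ ψ (Icc 1 (r * k)) := hψ.injOn.leftInvOn_invFunOn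
  have image_θ_image_ψ (e : Finset ℕ) (he : e ⊆ Icc 1 (r * k)) : (e.image ψ).image θ = e :=
    coe_injective (by simpa using (θ_ψ.mono (coe_subset.2 he)).image_image)
  have edge_subset (e : Finset ℕ) (he : e ∈ H) : e ⊆ Icc 1 (r * k) :=
    cover ▸ subset_biUnion_of_mem id he
  have cover_image : (H.image (image ψ)).biUnion id = (Icc 1 (r * k)).image ψ := by
    rw [← cover, image_biUnion, biUnion_image]
    rfl
  have copy_eq : (H.image (image ψ)).image (image θ) = H := by
    rw [image_image]
    exact (image_congr fun e he ↦ image_θ_image_ψ e (edge_subset e he)).trans image_id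
  refine ⟨H.image (image ψ), image_subset_iff.2 hM, ?_, θ, ?_, ?_, copy_eq⟩
  · refine card_eq ▸ card_image_iff.2 fun e he f hf h_eq ↦ ?_
    rw [← image_θ_image_ψ e (edge_subset e he), h_eq, image_θ_image_ψ f (edge_subset f hf)]
  · rw [cover_image, coe_image]
    rintro _ ⟨x, hx, rfl⟩ _ ⟨y, hy, rfl⟩ hxy
    rw [θ_ψ hx, θ_ψ hy]
    exact (hψ.lt_iff_lt hx hy).1 hxy
  · rw [cover_image, image_θ_image_ψ _ subset_rfl]

theorem ofSubtype_smul_finset {α : Type*} [DecidableEq α] {V : Finset α} (s : Perm V) :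
    Perm.ofSubtype s • V = V :=
  eq_of_subset_of_card_le
    (image_subset_iff.2 fun x hx ↦ (Perm.ofSubtype_apply_mem_iff_mem s x).2 hx)
    (card_smul_finset _ _).ge

section RandomCopy

variable {r k m n : ℕ} {H M : Finset (Finset ℕ)}

theorem exists_block_embedding (hH : IsOrderedMatching r k H) (hM : IsOrderedMatching r n M)
    (hmn : m * k ≤ n) :
    ∃ (ψ : Fin m → ℕ → ℕ) (block : Fin m × Icc 1 (r * k) ↪ Icc 1 (r * n)),
      (∀ i (x : Icc 1 (r * k)), ψ i x = block (i, x)) ∧ ∀ i, ∀ e ∈ H, e.image (ψ i) ∈ M := by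
  have disjoint_H := hH.pairwiseDisjoint
  have disjoint_M := hM.pairwiseDisjoint
  obtain ⟨card_H, card_edge_H, -, cover_H⟩ := hH
  obtain ⟨card_M, card_edge_M, -, cover_M⟩ := hM
  obtain ⟨ψ, ψ_injOn, ψ_image_mem⟩ := exists_injOn_uncurry_image_mem (ι := Fin m)
    disjoint_H disjoint_M (fun e he e' he' ↦ (card_edge_H e he).trans (card_edge_M e' he').symm)
    (by simpa only [Fintype.card_fin, card_H, card_M] using hmn)
  have ψ_mem (i : Fin m) (x : Icc 1 (r * k)) : ψ i x ∈ Icc 1 (r * n) := by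
    obtain ⟨e, he, hx⟩ := mem_biUnion.1 (cover_H.ge x.2)
    exact cover_M.le (mem_biUnion.2 ⟨_, ψ_image_mem i e he, mem_image_of_mem _ hx⟩)
  have ψ_injective : Function.Injective fun p : Fin m × Icc 1 (r * k) ↦
      (⟨ψ p.1 p.2, ψ_mem p.1 p.2⟩ : Icc 1 (r * n)) := by
    intro p q hpq
    obtain ⟨fst_eq, snd_eq⟩ := Prod.mk.inj <| ψ_injOn
      (Set.mk_mem_prod (Set.mem_univ p.1) (cover_H.ge p.2.2))
      (Set.mk_mem_prod (Set.mem_univ q.1) (cover_H.ge q.2.2)) (congrArg Subtype.val hpq)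
    exact Prod.ext fst_eq (Subtype.ext snd_eq)
  exact ⟨ψ, ⟨_, ψ_injective⟩, fun _ _ ↦ rfl, ψ_image_mem⟩

theorem card_perm_not_containsCopy_smul_le (hH : IsOrderedMatching r k H)
    (hM : IsOrderedMatching r n M) (hmn : m * k ≤ n) :
    (#{s : Perm (Icc 1 (r * n)) | ¬ ContainsCopy r k H (Perm.ofSubtype s • M)} : ℝ) ≤
      (1 - 1 / (r * k)!) ^ m * Fintype.card (Perm (Icc 1 (r * n))) := by
  obtain ⟨ψ, block, ψ_eq, ψ_image_mem⟩ := exists_block_embedding hH hM hmn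
  have ofSubtype_ψ (s : Perm (Icc 1 (r * n))) (i : Fin m) (x : Icc 1 (r * k)) :
      Perm.ofSubtype s (ψ i x) = s (block (i, x)) := by
    rw [ψ_eq, Perm.ofSubtype_apply_coe]
  have containsCopy_of_strictMono (s : Perm (Icc 1 (r * n))) (i : Fin m)
      (hs : StrictMono fun x ↦ s (block (i, x))) :
      ContainsCopy r k H (Perm.ofSubtype s • M) := by
    refine containsCopy_of_strictMonoOn (ψ := Perm.ofSubtype s ∘ ψ i) hH
      (fun x hx y hy hxy ↦ ?_) fun e he ↦ ?_
    · have value_lt : s (block (i, ⟨x, hx⟩)) < s (block (i, ⟨y, hy⟩)) := hs hxy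
      rwa [← Subtype.coe_lt_coe, ← ofSubtype_ψ, ← ofSubtype_ψ] at value_lt
    · rw [← image_image]
      exact smul_mem_smul_finset (ψ_image_mem i e he)
  calc (#{s : Perm (Icc 1 (r * n)) | ¬ ContainsCopy r k H (Perm.ofSubtype s • M)} : ℝ)
      ≤ #{s : Perm (Icc 1 (r * n)) | ∀ i, ¬ StrictMono fun x ↦ s (block (i, x))} := by
        gcongr with s
        exact fun hs i ↦ mt (containsCopy_of_strictMono s i) hs
    _ ≤ (1 - 1 / (r * k)!) ^ m * Fintype.card (Perm (Icc 1 (r * n))) := by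
        convert card_perm_forall_not_strictMono_le block <;> simp

theorem card_matchingFamilies_not_containsCopy_le (hH : IsOrderedMatching r k H)
    (hmn : m * k ≤ n) :
    (#{M ∈ matchingFamilies r n | ¬ ContainsCopy r k H M} : ℝ) ≤
      (1 - 1 / (r * k)!) ^ m * #(matchingFamilies r n) := by
  refine card_filter_le_of_forall_card_filter_perm_le
    (σ := fun s : Perm (Icc 1 (r * n)) ↦ MulAction.toPerm (Perm.ofSubtype s))
    (fun s M hM ↦ ?_) fun M hM ↦ ?_
  · rw [mem_matchingFamilies] at hM ⊢
    exact hM.smul (ofSubtype_smul_finset s)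
  · exact card_perm_not_containsCopy_smul_le hH (mem_matchingFamilies.1 hM) hmn

theorem one_sub_pow_le_prob_containsCopy (hr : r ≠ 0) (hH : IsOrderedMatching r k H)
    (hmn : m * k ≤ n) :
    1 - (1 - 1 / (r * k)! : ℝ) ^ m ≤ prob r n (ContainsCopy r k H) := by
  have card_pos : (0 : ℝ) < #(matchingFamilies r n) :=
    Nat.cast_pos.2 (matchingFamilies_nonempty hr n).card_pos
  have card_add_card_not : (#{M ∈ matchingFamilies r n | ContainsCopy r k H M} : ℝ) +
      #{M ∈ matchingFamilies r n | ¬ ContainsCopy r k H M} = #(matchingFamilies r n) := by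
    exact_mod_cast card_filter_add_card_filter_not (ContainsCopy r k H)
  rw [prob, le_div_iff₀ card_pos]
  linarith [card_matchingFamilies_not_containsCopy_le hH hmn]

end RandomCopy

theorem prob_le_one (r n : ℕ) (A : Finset (Finset ℕ) → Prop) : prob r n A ≤ 1 :=
  div_le_one_of_le₀ (Nat.cast_le.2 (card_filter_le _ _)) (Nat.cast_nonneg _)

/-- **Proposition.** Every fixed ordered `r`-matching `H` a.a.s. appears as a copy in
`RM_n^(r)`. -/
theorem aas_contains_fixed_copy (r k : ℕ) (hr : 2 ≤ r) (H : Finset (Finset ℕ))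
    (hH : IsOrderedMatching r k H) :
    Filter.Tendsto (fun n : ℕ => prob r n (ContainsCopy r k H))
      Filter.atTop (nhds 1) := by
  have inv_factorial_pos : (0 : ℝ) < 1 / (r * k)! := by positivity
  have inv_factorial_le_one : (1 / (r * k)! : ℝ) ≤ 1 :=
    div_le_one_of_le₀ (Nat.one_le_cast.2 (Nat.factorial_pos _)) (Nat.cast_nonneg _)
  have pow_tendsto : Filter.Tendsto (fun n ↦ (1 - 1 / (r * k)! : ℝ) ^ (n / (k + 1)))
      Filter.atTop (nhds 0) :=
    (tendsto_pow_atTop_nhds_zero_of_lt_one (by linarith) (by linarith)).comp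
      (Nat.tendsto_div_const_atTop k.succ_ne_zero)
  -- Dividing by `k + 1` instead of `k` gives arbitrarily many blocks also for `k = 0`.
  have block_count_mul_le (n : ℕ) : n / (k + 1) * k ≤ n :=
    (Nat.mul_le_mul_left _ k.le_succ).trans (Nat.div_mul_le_self n (k + 1))
  exact tendsto_of_tendsto_of_tendsto_of_le_of_le (by simpa using pow_tendsto.const_sub 1)
    tendsto_const_nhds
    (fun n ↦ one_sub_pow_le_prob_containsCopy (by omega) hH (block_count_mul_le n))
    fun n ↦ prob_le_one r n _
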